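/- arXiv:math/0507156 — 2 statements merged into one kernel-verified Lean document; each statement's English description precedes it below -/
import Mathlib

section
/- Let (a_α)_{α ∈ 𝔽ₙ⁺} be complex numbers with a_{g₀} real such that for every r ∈ [0,1) the series ∑_{k=1}^∞ r^k (∑_{|α|=k} |a_α|²)^{1/2} converges, and such that for every r ∈ [0,1) the selfadjoint operator H(r) := ∑_{k=1}^∞ ∑_{|α|=k} r^k conj(a_α) S_α* + a_{g₀} I + ∑_{k=1}^∞ ∑_{|α|=k} r^k a_α S_α (which converges in operator norm) satisfies ‖H(r)‖ ≤ 1. Then: (i) (∑_{|α|=k} |a_α|²)^{1/2} ≤ 1 − |a_{g₀}| for every k ≥ 1; (ii) for every complex Hilbert space 𝒦 and every (T₁,…,Tₙ) ∈ [B(𝒦)ⁿ]_{1/2}, ∑_{k=0}^∞ ‖∑_{|α|=k} |a_α| T_α‖ ≤ 1; (iii) for every (T₁,…,Tₙ) ∈ [B(𝒦)ⁿ]_{1/3}, ∑_{k=1}^∞ ‖∑_{|α|=k} |a_α| T_α*‖ + |a_{g₀}| + ∑_{k=1}^∞ ‖∑_{|α|=k} |a_α| T_α‖ ≤ 1. In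 particular, for nonnegative tuples r: ∑_{α ∈ 𝔽ₙ⁺} |a_α| r_α ≤ 1 if ‖r‖₂ ≤ 1/2, and |a_{g₀}| + 2 ∑_{|α| ≥ 1} |a_α| r_α ≤ 1 if ‖r‖₂ ≤ 1/3. -/
open scoped BigOperators

/-- The full Fock space, identified with `ℓ²(𝔽ₙ⁺)` where the free monoid `𝔽ₙ⁺` on `n`
generators is identified with `List (Fin n)`. -/
noncomputable abbrev Fock (n : ℕ) : Type := lp (fun _ : List (Fin n) => ℂ) 2

/-- The orthonormal basis vector `e_α` of the Fock space. -/
noncomputable def fockBasis (n : ℕ) (α : List (Fin n)) : Fock n := lp.single 2 α 1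

/-- For a word `α = g_{i₁} ⋯ g_{i_k}`, the product `T_α = T_{i₁} ⋯ T_{i_k}` (and `T_{g₀} = 1`). -/
noncomputable def wordProd {n : ℕ} {M : Type*} [Monoid M] (T : Fin n → M)
    (α : List (Fin n)) : M :=
  (α.map T).prod

lemma fb_inner (n : ℕ) (β γ : List (Fin n)) :
    inner ℂ (fockBasis n β) (fockBasis n γ) = if β = γ then (1 : ℂ) else 0 := by
  classical
  unfold fockBasis
  rw [lp.inner_single_left]
  by_cases h : β = γ
  · subst h; simp
  · simp [h, lp.single_apply, Pi.single_apply]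

lemma wordProd_cons {n : ℕ} {M : Type*} [Monoid M] (T : Fin n → M) (i : Fin n)
    (α : List (Fin n)) : wordProd T (i :: α) = T i * wordProd T α := by
  simp [wordProd]

lemma wordProd_fb {n : ℕ} (S : Fin n → Fock n →L[ℂ] Fock n)
    (hS : ∀ (i : Fin n) (α : List (Fin n)), S i (fockBasis n α) = fockBasis n (i :: α))
    (α β : List (Fin n)) : wordProd S α (fockBasis n β) = fockBasis n (α ++ β) := by
  induction α with
  | nil => simp [wordProd]
  | cons i α ih => rw [wordProd_cons, ContinuousLinearMap.mul_apply, ih, hS]; rfl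

noncomputable def yvec {n : ℕ} (a : List (Fin n) → ℂ) (k : ℕ) : Fock n :=
  ∑ w : Fin k → Fin n, a (List.ofFn w) • fockBasis n (List.ofFn w)

lemma yvec_inner_ne {n : ℕ} (a : List (Fin n) → ℂ) (k : ℕ) (γ : List (Fin n))
    (h : γ.length ≠ k) : inner ℂ (yvec a k) (fockBasis n γ) = (0 : ℂ) := by
  unfold yvec
  rw [sum_inner]
  refine Finset.sum_eq_zero fun w _ => ?_
  rw [inner_smul_left, fb_inner, if_neg, mul_zero]
  rintro rfl
  simp at h

lemma yvec_inner_eq {n : ℕ} (a : List (Fin n) → ℂ) (k : ℕ) (w : Fin k → Fin n) :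
    inner ℂ (yvec a k) (fockBasis n (List.ofFn w)) = (starRingEnd ℂ) (a (List.ofFn w)) := by
  unfold yvec
  rw [sum_inner, Finset.sum_eq_single w]
  · rw [inner_smul_left, fb_inner, if_pos rfl, mul_one]
  · intro b _ hb
    rw [inner_smul_left, fb_inner, if_neg, mul_zero]
    intro h
    exact hb (List.ofFn_injective h)
  · simp

lemma yvec_inner_self {n : ℕ} (a : List (Fin n) → ℂ) (k : ℕ) :
    inner ℂ (yvec a k) (yvec a k) = ((∑ w : Fin k → Fin n, ‖a (List.ofFn w)‖ ^ 2 : ℝ) : ℂ) := by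
  have h : inner ℂ (yvec a k) (yvec a k) = inner ℂ (yvec a k)
      (∑ w : Fin k → Fin n, a (List.ofFn w) • fockBasis n (List.ofFn w)) := rfl
  rw [h, inner_sum]
  push_cast
  refine Finset.sum_congr rfl fun w _ => ?_
  rw [inner_smul_right, yvec_inner_eq, Complex.mul_conj']

/-- The test vector. -/
noncomputable def tvec {n : ℕ} (a : List (Fin n) → ℂ) (k : ℕ) (t : ℝ) : Fock n :=
  fockBasis n [] + (t : ℂ) • yvec a k

lemma tvec_inner_self {n : ℕ} (a : List (Fin n) → ℂ) (k : ℕ) (hk : k ≠ 0) (t : ℝ) :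
    inner ℂ (tvec a k t) (tvec a k t) =
      ((1 + t ^ 2 * ∑ w : Fin k → Fin n, ‖a (List.ofFn w)‖ ^ 2 : ℝ) : ℂ) := by
  have h1 : inner ℂ (yvec a k) (fockBasis n []) = (0 : ℂ) := yvec_inner_ne a k [] (by simpa using hk.symm)
  have h2 : inner ℂ (fockBasis n []) (yvec a k) = (0 : ℂ) := by
    rw [← inner_conj_symm, h1, map_zero]
  unfold tvec
  simp only [inner_add_left, inner_add_right, inner_smul_left, inner_smul_right, h1, h2,
    yvec_inner_self, fb_inner, Complex.conj_ofReal]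
  push_cast
  simp
  ring

lemma tvec_word {n : ℕ} (S : Fin n → Fock n →L[ℂ] Fock n)
    (hS : ∀ (i : Fin n) (α : List (Fin n)), S i (fockBasis n α) = fockBasis n (i :: α))
    (a : List (Fin n) → ℂ) (k : ℕ) (t : ℝ) (α : List (Fin n)) (hα : α ≠ []) :
    inner ℂ (tvec a k t) (wordProd S α (tvec a k t)) =
      (t : ℂ) * inner ℂ (yvec a k) (fockBasis n α) := by
  have hy : ∀ z : Fock n, (∀ w : Fin k → Fin n, inner ℂ z (fockBasis n (α ++ List.ofFn w)) = (0:ℂ)) →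
      inner ℂ z (wordProd S α (yvec a k)) = (0 : ℂ) := by
    intro z hz
    rw [yvec, map_sum, inner_sum]
    refine Finset.sum_eq_zero fun w _ => ?_
    rw [map_smul, inner_smul_right, wordProd_fb S hS, hz, mul_zero]
  have h1 : inner ℂ (fockBasis n []) (wordProd S α (yvec a k)) = (0 : ℂ) := by
    refine hy _ fun w => ?_
    rw [fb_inner, if_neg]
    simp [hα]
  have h2 : inner ℂ (yvec a k) (wordProd S α (yvec a k)) = (0 : ℂ) := by
    refine hy _ fun w => yvec_inner_ne _ _ _ ?_
    simp [hα]
  have h3 : inner ℂ (fockBasis n []) (fockBasis n α) = (0 : ℂ) := by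
    rw [fb_inner, if_neg hα.symm]
  conv_lhs => unfold tvec
  simp only [map_add, map_smul, wordProd_fb S hS, List.append_nil, inner_add_left, inner_add_right,
    inner_smul_left, inner_smul_right, h1, h2, h3, Complex.conj_ofReal]
  ring

lemma tvec_block {n : ℕ} (S : Fin n → Fock n →L[ℂ] Fock n)
    (hS : ∀ (i : Fin n) (α : List (Fin n)), S i (fockBasis n α) = fockBasis n (i :: α))
    (a : List (Fin n) → ℂ) (m : ℕ) (t r : ℝ) (j : ℕ) :
    inner ℂ (tvec a (m+1) t) ((∑ w : Fin (j + 1) → Fin n,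
        ((r : ℂ) ^ (j + 1) * a (List.ofFn w)) • wordProd S (List.ofFn w)) (tvec a (m+1) t)) =
      if j = m then ((t * r ^ (m+1) * ∑ w : Fin (m+1) → Fin n, ‖a (List.ofFn w)‖ ^ 2 : ℝ) : ℂ)
      else 0 := by
  rw [ContinuousLinearMap.sum_apply, inner_sum]
  split_ifs with h
  · subst h
    simp only [Complex.ofReal_mul, Complex.ofReal_pow, Complex.ofReal_sum]
    rw [Finset.mul_sum]
    refine Finset.sum_congr rfl fun w _ => ?_
    rw [ContinuousLinearMap.smul_apply, inner_smul_right, tvec_word S hS _ _ _ _ (by simp),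
      yvec_inner_eq, ← Complex.mul_conj']
    ring
  · refine Finset.sum_eq_zero fun w _ => ?_
    rw [ContinuousLinearMap.smul_apply, inner_smul_right, tvec_word S hS _ _ _ _ (by simp),
      yvec_inner_ne _ _ _ (by simpa using h)]
    simp

lemma adj_block {n : ℕ} (S : Fin n → Fock n →L[ℂ] Fock n)
    (a : List (Fin n) → ℂ) (r : ℝ) (j : ℕ) (v : Fock n) :
    inner ℂ v ((∑ w : Fin (j + 1) → Fin n,
        ((r : ℂ) ^ (j + 1) * (starRingEnd ℂ) (a (List.ofFn w))) •
          ContinuousLinearMap.adjoint (wordProd S (List.ofFn w))) v) =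
    (starRingEnd ℂ) (inner ℂ v ((∑ w : Fin (j + 1) → Fin n,
        ((r : ℂ) ^ (j + 1) * a (List.ofFn w)) • wordProd S (List.ofFn w)) v)) := by
  simp only [ContinuousLinearMap.sum_apply, inner_sum, map_sum, ContinuousLinearMap.smul_apply,
    inner_smul_right, map_mul, map_pow, Complex.conj_ofReal,
    ContinuousLinearMap.adjoint_inner_right, inner_conj_symm]

lemma quad_bound {n : ℕ} (a : List (Fin n) → ℂ) (ha_im : (a []).im = 0)
    (S : Fin n → Fock n →L[ℂ] Fock n)
    (hS : ∀ (i : Fin n) (α : List (Fin n)), S i (fockBasis n α) = fockBasis n (i :: α))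
    (r : ℝ)
    (hsum1 : Summable (fun k : ℕ => ∑ w : Fin (k + 1) → Fin n,
        ((r : ℂ) ^ (k + 1) * a (List.ofFn w)) • wordProd S (List.ofFn w)))
    (hsum2 : Summable (fun k : ℕ => ∑ w : Fin (k + 1) → Fin n,
        ((r : ℂ) ^ (k + 1) * (starRingEnd ℂ) (a (List.ofFn w))) •
          ContinuousLinearMap.adjoint (wordProd S (List.ofFn w))))
    (hnorm : ‖(∑' k : ℕ, ∑ w : Fin (k + 1) → Fin n,
          ((r : ℂ) ^ (k + 1) * (starRingEnd ℂ) (a (List.ofFn w))) •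
            ContinuousLinearMap.adjoint (wordProd S (List.ofFn w)))
        + a [] • (1 : Fock n →L[ℂ] Fock n)
        + (∑' k : ℕ, ∑ w : Fin (k + 1) → Fin n,
          ((r : ℂ) ^ (k + 1) * a (List.ofFn w)) • wordProd S (List.ofFn w))‖ ≤ 1)
    (m : ℕ) (t : ℝ) :
    |(a []).re * (1 + t ^ 2 * ∑ w : Fin (m+1) → Fin n, ‖a (List.ofFn w)‖ ^ 2) +
      2 * (t * r ^ (m+1) * ∑ w : Fin (m+1) → Fin n, ‖a (List.ofFn w)‖ ^ 2)| ≤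
      1 + t ^ 2 * ∑ w : Fin (m+1) → Fin n, ‖a (List.ofFn w)‖ ^ 2 := by
  set Q := ∑ w : Fin (m+1) → Fin n, ‖a (List.ofFn w)‖ ^ 2 with hQ
  set v := tvec a (m+1) t with hv
  let φ : (Fock n →L[ℂ] Fock n) →L[ℂ] ℂ :=
    (innerSL ℂ v).comp (ContinuousLinearMap.apply ℂ (Fock n) v)
  have hφ : ∀ X, φ X = inner ℂ v (X v) := fun X => rfl
  have hvv : inner ℂ v v = ((1 + t ^ 2 * Q : ℝ) : ℂ) := tvec_inner_self a (m+1) (by simp) t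
  have hvn : ‖v‖ * ‖v‖ = 1 + t ^ 2 * Q := by
    have := inner_self_eq_norm_mul_norm (𝕜 := ℂ) v
    rw [hvv] at this
    exact this.symm
  have e1 : φ (∑' k : ℕ, ∑ w : Fin (k + 1) → Fin n,
          ((r : ℂ) ^ (k + 1) * a (List.ofFn w)) • wordProd S (List.ofFn w)) =
          ((t * r ^ (m+1) * Q : ℝ) : ℂ) := by
    rw [ContinuousLinearMap.map_tsum _ hsum1]
    simp only [hφ]
    simp_rw [hv, tvec_block S hS]
    rw [tsum_ite_eq]
  have e2 : φ (∑' k : ℕ, ∑ w : Fin (k + 1) → Fin n,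
          ((r : ℂ) ^ (k + 1) * (starRingEnd ℂ) (a (List.ofFn w))) •
            ContinuousLinearMap.adjoint (wordProd S (List.ofFn w))) =
          ((t * r ^ (m+1) * Q : ℝ) : ℂ) := by
    rw [ContinuousLinearMap.map_tsum _ hsum2]
    simp only [hφ]
    simp_rw [adj_block, hv, tvec_block S hS, apply_ite (starRingEnd ℂ), map_zero,
      Complex.conj_ofReal]
    rw [tsum_ite_eq]
  have ha : a [] = (((a []).re : ℝ) : ℂ) := by
    apply Complex.ext <;> simp [ha_im]
  have e3 : φ (a [] • (1 : Fock n →L[ℂ] Fock n)) = (((a []).re * (1 + t ^ 2 * Q) : ℝ) : ℂ) := by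
    rw [map_smul, hφ, ContinuousLinearMap.one_apply, hvv, smul_eq_mul]
    conv_lhs => rw [ha]
    push_cast; ring
  set H := (∑' k : ℕ, ∑ w : Fin (k + 1) → Fin n,
          ((r : ℂ) ^ (k + 1) * (starRingEnd ℂ) (a (List.ofFn w))) •
            ContinuousLinearMap.adjoint (wordProd S (List.ofFn w)))
        + a [] • (1 : Fock n →L[ℂ] Fock n)
        + (∑' k : ℕ, ∑ w : Fin (k + 1) → Fin n,
          ((r : ℂ) ^ (k + 1) * a (List.ofFn w)) • wordProd S (List.ofFn w)) with hH
  have e4 : φ H = (((a []).re * (1 + t ^ 2 * Q) + 2 * (t * r ^ (m+1) * Q) : ℝ) : ℂ) := by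
    rw [hH, map_add, map_add, e1, e2, e3]
    push_cast; ring
  have e5 : ‖φ H‖ ≤ ‖v‖ * ‖v‖ := by
    rw [hφ]
    calc _ ≤ ‖v‖ * ‖H v‖ := norm_inner_le_norm _ _
      _ ≤ ‖v‖ * (1 * ‖v‖) := by
        gcongr
        exact H.le_of_opNorm_le hnorm v
      _ = _ := by ring
  rw [e4, hvn, Complex.norm_real, Real.norm_eq_abs] at e5
  exact e5

lemma real_aux (x s q : ℝ) (hs : 0 ≤ s)
    (h : ∀ t : ℝ, |x * (1 + t ^ 2 * s ^ 2) + 2 * (t * q * s ^ 2)| ≤ 1 + t ^ 2 * s ^ 2) :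
    q * s ≤ 1 - |x| := by
  rcases hs.eq_or_lt with h0 | h0
  · have := h 0
    subst h0
    simp at this
    simp [this]
  · have h1 := h s⁻¹
    have h2 := h (-s⁻¹)
    have e1 : s⁻¹ ^ 2 * s ^ 2 = 1 := by field_simp
    have e2 : s⁻¹ * q * s ^ 2 = q * s := by field_simp
    have e3 : -s⁻¹ * q * s ^ 2 = -(q * s) := by field_simp
    rw [e1, e2] at h1
    rw [neg_sq, e1, e3] at h2
    rw [abs_le] at h1 h2
    rcases abs_cases x with hx | hx <;> linarith

lemma sum_adj_le {n : ℕ} {K : Type} [NormedAddCommGroup K] [InnerProductSpace ℂ K] [CompleteSpace K]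
    (T : Fin n → K →L[ℂ] K) (ρ : ℝ) (hρ : 0 ≤ ρ)
    (hT : Real.sqrt ‖∑ i, T i * ContinuousLinearMap.adjoint (T i)‖ ≤ ρ) (k : ℕ) (x : K) :
    ∑ w : Fin k → Fin n, ‖ContinuousLinearMap.adjoint (wordProd T (List.ofFn w)) x‖ ^ 2 ≤
      (ρ ^ k * ‖x‖) ^ 2 := by
  have base : ∀ x, ∑ i, ‖ContinuousLinearMap.adjoint (T i) x‖ ^ 2 ≤ (ρ * ‖x‖) ^ 2 := by
    intro x
    have h1 : ((∑ i, ‖ContinuousLinearMap.adjoint (T i) x‖ ^ 2 : ℝ) : ℂ) =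
        inner ℂ x ((∑ i, T i * ContinuousLinearMap.adjoint (T i)) x) := by
      rw [ContinuousLinearMap.sum_apply, inner_sum]
      simp only [Complex.ofReal_mul, Complex.ofReal_pow, Complex.ofReal_sum]
      refine Finset.sum_congr rfl fun i _ => ?_
      rw [ContinuousLinearMap.mul_apply, ← ContinuousLinearMap.adjoint_inner_left,
        inner_self_eq_norm_sq_to_K]
      rfl
    have h2 : ‖∑ i, T i * ContinuousLinearMap.adjoint (T i)‖ ≤ ρ ^ 2 := by
      rwa [Real.sqrt_le_left hρ] at hT
    have h3 : ∑ i, ‖ContinuousLinearMap.adjoint (T i) x‖ ^ 2 =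
        ‖((∑ i, ‖ContinuousLinearMap.adjoint (T i) x‖ ^ 2 : ℝ) : ℂ)‖ := by
      rw [Complex.norm_real, Real.norm_of_nonneg (by positivity)]
    rw [h3, h1]
    calc _ ≤ ‖x‖ * ‖(∑ i, T i * ContinuousLinearMap.adjoint (T i)) x‖ := norm_inner_le_norm _ _
      _ ≤ ‖x‖ * (ρ ^ 2 * ‖x‖) := by
        gcongr
        exact ContinuousLinearMap.le_of_opNorm_le _ h2 x
      _ = _ := by ring
  induction k generalizing x with
  | zero => simp [wordProd, ← ContinuousLinearMap.star_eq_adjoint]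
  | succ k ih =>
    rw [← (Fin.consEquiv (fun _ => Fin n)).sum_comp, Fintype.sum_prod_type]
    calc _ = ∑ i, ∑ w : Fin k → Fin n, ‖ContinuousLinearMap.adjoint (wordProd T (List.ofFn w))
              (ContinuousLinearMap.adjoint (T i) x)‖ ^ 2 := by
            refine Finset.sum_congr rfl fun i _ => Finset.sum_congr rfl fun w _ => ?_
            have : List.ofFn ((Fin.consEquiv (fun _ => Fin n)) (i, w)) = i :: List.ofFn w := by
              simp [Fin.consEquiv, List.ofFn_succ]
            rw [this, wordProd_cons, ContinuousLinearMap.mul_def,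
              ContinuousLinearMap.adjoint_comp]
            rfl
      _ ≤ ∑ i, (ρ ^ k * ‖ContinuousLinearMap.adjoint (T i) x‖) ^ 2 :=
            Finset.sum_le_sum fun i _ => ih _
      _ = (ρ ^ k) ^ 2 * ∑ i, ‖ContinuousLinearMap.adjoint (T i) x‖ ^ 2 := by
            rw [Finset.mul_sum]; simp_rw [mul_pow]
      _ ≤ (ρ ^ k) ^ 2 * (ρ * ‖x‖) ^ 2 := by gcongr; exact base x
      _ = _ := by ring

lemma adj_norm_le {n : ℕ} {K : Type} [NormedAddCommGroup K] [InnerProductSpace ℂ K]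
    [CompleteSpace K] (a : List (Fin n) → ℂ)
    (T : Fin n → K →L[ℂ] K) (ρ : ℝ) (hρ : 0 ≤ ρ)
    (hT : Real.sqrt ‖∑ i, T i * ContinuousLinearMap.adjoint (T i)‖ ≤ ρ) (k : ℕ) :
    ‖∑ w : Fin k → Fin n, ((‖a (List.ofFn w)‖ : ℂ)) •
            ContinuousLinearMap.adjoint (wordProd T (List.ofFn w))‖ ≤
      Real.sqrt (∑ w : Fin k → Fin n, ‖a (List.ofFn w)‖ ^ 2) * ρ ^ k := by
  refine ContinuousLinearMap.opNorm_le_bound _ (by positivity) fun x => ?_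
  rw [ContinuousLinearMap.sum_apply]
  calc _ ≤ ∑ w : Fin k → Fin n, ‖a (List.ofFn w)‖ *
        ‖ContinuousLinearMap.adjoint (wordProd T (List.ofFn w)) x‖ := by
        refine (norm_sum_le _ _).trans (le_of_eq (Finset.sum_congr rfl fun w _ => ?_))
        rw [ContinuousLinearMap.smul_apply, norm_smul]
        simp
    _ ≤ Real.sqrt (∑ w : Fin k → Fin n, ‖a (List.ofFn w)‖ ^ 2) *
        Real.sqrt (∑ w : Fin k → Fin n,
          ‖ContinuousLinearMap.adjoint (wordProd T (List.ofFn w)) x‖ ^ 2) :=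
        Real.sum_mul_le_sqrt_mul_sqrt _ _ _
    _ ≤ Real.sqrt (∑ w : Fin k → Fin n, ‖a (List.ofFn w)‖ ^ 2) * (ρ ^ k * ‖x‖) := by
        gcongr
        exact Real.sqrt_le_iff.2 ⟨by positivity, sum_adj_le T ρ hρ hT k x⟩
    _ = _ := by ring

lemma adj_norm_eq {n : ℕ} {K : Type} [NormedAddCommGroup K] [InnerProductSpace ℂ K]
    [CompleteSpace K] (a : List (Fin n) → ℂ) (T : Fin n → K →L[ℂ] K) (k : ℕ) :
    ‖∑ w : Fin k → Fin n, ((‖a (List.ofFn w)‖ : ℂ)) • wordProd T (List.ofFn w)‖ =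
    ‖∑ w : Fin k → Fin n, ((‖a (List.ofFn w)‖ : ℂ)) •
            ContinuousLinearMap.adjoint (wordProd T (List.ofFn w))‖ := by
  rw [← norm_star]
  congr 1
  rw [star_sum]
  refine Finset.sum_congr rfl fun w _ => ?_
  rw [star_smul, ContinuousLinearMap.star_eq_adjoint]
  simp

lemma geo_aux (f : ℕ → ℝ) (c ρ : ℝ) (h0 : ∀ k, 0 ≤ f k) (hρ : 0 ≤ ρ) (hρ1 : ρ < 1)
    (h : ∀ k, f k ≤ c * ρ ^ (k + 1)) :
    Summable f ∧ ∑' k, f k ≤ c * (ρ / (1 - ρ)) := by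
  have hs : HasSum (fun k : ℕ => c * ρ ^ (k + 1)) (c * (ρ / (1 - ρ))) := by
    have := (hasSum_geometric_of_lt_one hρ hρ1).mul_left (c * ρ)
    have e : (fun k : ℕ => c * ρ ^ (k + 1)) = fun k => c * ρ * ρ ^ k := by ext k; ring
    rw [e, div_eq_mul_inv, ← mul_assoc]
    exact this
  have hf := Summable.of_nonneg_of_le h0 h hs.summable
  exact ⟨hf, hf.tsum_le_tsum h hs.summable |>.trans hs.tsum_eq.le⟩

lemma sum_r_sq {n : ℕ} (r : Fin n → ℝ) (k : ℕ) :
    ∑ w : Fin k → Fin n, wordProd r (List.ofFn w) ^ 2 = (∑ i, r i ^ 2) ^ k := by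
  rw [Finset.sum_pow']
  simp [wordProd, List.prod_ofFn, Finset.prod_pow]

lemma word_nonneg {n : ℕ} (r : Fin n → ℝ) (hr : ∀ i, 0 ≤ r i) (α : List (Fin n)) :
    0 ≤ wordProd r α := by
  unfold wordProd
  apply List.prod_nonneg
  simp only [List.mem_map]
  rintro _ ⟨i, _, rfl⟩
  exact hr i

lemma r_bound {n : ℕ} (a : List (Fin n) → ℂ) (r : Fin n → ℝ) (ρ : ℝ)
    (h : Real.sqrt (∑ i, r i ^ 2) ≤ ρ) (k : ℕ) :
    ∑ w : Fin k → Fin n, ‖a (List.ofFn w)‖ * wordProd r (List.ofFn w) ≤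
      Real.sqrt (∑ w : Fin k → Fin n, ‖a (List.ofFn w)‖ ^ 2) * ρ ^ k := by
  refine (Real.sum_mul_le_sqrt_mul_sqrt _ _ _).trans ?_
  have hp : Real.sqrt ((∑ i, r i ^ 2) ^ k) = Real.sqrt (∑ i, r i ^ 2) ^ k := by
    rw [Real.sqrt_eq_iff_eq_sq (by positivity) (by positivity), ← pow_mul, mul_comm, pow_mul,
      Real.sq_sqrt (by positivity)]
  rw [sum_r_sq, hp]
  gcongr

lemma r_summable {n : ℕ} (a : List (Fin n) → ℂ) (r : Fin n → ℝ) (hr : ∀ i, 0 ≤ r i) (c ρ : ℝ)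
    (hρ : 0 ≤ ρ) (hρ1 : ρ < 1)
    (hc : ∀ k : ℕ, Real.sqrt (∑ w : Fin (k+1) → Fin n, ‖a (List.ofFn w)‖ ^ 2) ≤ c)
    (h : Real.sqrt (∑ i, r i ^ 2) ≤ ρ) :
    Summable (fun α : List (Fin n) => ‖a α‖ * wordProd r α) ∧
    ∑' α : List (Fin n), ‖a α‖ * wordProd r α ≤ ‖a []‖ + c * (ρ / (1 - ρ)) := by
  set F := fun α : List (Fin n) => ‖a α‖ * wordProd r α with hF
  have hF0 : ∀ α, 0 ≤ F α := fun α => mul_nonneg (norm_nonneg _) (word_nonneg r hr α)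
  set G := fun k : ℕ => ∑ w : Fin k → Fin n, F (List.ofFn w) with hG
  have hG0 : ∀ k, 0 ≤ G k := fun k => Finset.sum_nonneg fun w _ => hF0 _
  obtain ⟨g1, g2⟩ := geo_aux (fun k => G (k+1)) c ρ (fun k => hG0 _) hρ hρ1 (fun k =>
    (r_bound a r ρ h (k+1)).trans (by gcongr; exact hc k))
  have hGs : Summable G := (summable_nat_add_iff 1).1 g1
  have hGz : G 0 = ‖a []‖ := by simp [hG, hF, wordProd]
  have hsig : Summable (fun p : (Σ k : ℕ, Fin k → Fin n) => F (List.ofFn p.2)) := by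
    rw [summable_sigma_of_nonneg (fun p => hF0 _)]
    refine ⟨fun k => Summable.of_finite, ?_⟩
    simpa [tsum_fintype] using hGs
  have heq : (fun p : (Σ k : ℕ, Fin k → Fin n) => F (List.ofFn p.2)) =
    F ∘ (List.equivSigmaTuple (α := Fin n)).symm := rfl
  have hFs : Summable F := by
    rw [heq, Equiv.summable_iff] at hsig
    exact hsig
  refine ⟨hFs, ?_⟩
  rw [← (List.equivSigmaTuple (α := Fin n)).symm.tsum_eq]
  change ∑' p : (Σ k : ℕ, Fin k → Fin n), F (List.ofFn p.2) ≤ _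
  rw [hsig.tsum_sigma]
  simp_rw [tsum_fintype]
  change ∑' k, G k ≤ _
  rw [hGs.tsum_eq_zero_add, hGz]
  linarith

theorem stmt_17 (n : ℕ) (hn : 1 ≤ n)
    (a : List (Fin n) → ℂ) (ha_im : (a []).im = 0)
    (hconv : ∀ r : ℝ, 0 ≤ r → r < 1 →
      Summable (fun k : ℕ =>
        r ^ k * Real.sqrt (∑ w : Fin k → Fin n, ‖a (List.ofFn w)‖ ^ 2)))
    (S : Fin n → Fock n →L[ℂ] Fock n)
    (hS : ∀ (i : Fin n) (α : List (Fin n)), S i (fockBasis n α) = fockBasis n (i :: α))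
    (hsum1 : ∀ r : ℝ, 0 ≤ r → r < 1 →
      Summable (fun k : ℕ => ∑ w : Fin (k + 1) → Fin n,
        ((r : ℂ) ^ (k + 1) * a (List.ofFn w)) • wordProd S (List.ofFn w)))
    (hsum2 : ∀ r : ℝ, 0 ≤ r → r < 1 →
      Summable (fun k : ℕ => ∑ w : Fin (k + 1) → Fin n,
        ((r : ℂ) ^ (k + 1) * (starRingEnd ℂ) (a (List.ofFn w))) •
          ContinuousLinearMap.adjoint (wordProd S (List.ofFn w))))
    (hnorm : ∀ r : ℝ, 0 ≤ r → r < 1 →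
      ‖(∑' k : ℕ, ∑ w : Fin (k + 1) → Fin n,
          ((r : ℂ) ^ (k + 1) * (starRingEnd ℂ) (a (List.ofFn w))) •
            ContinuousLinearMap.adjoint (wordProd S (List.ofFn w)))
        + a [] • (1 : Fock n →L[ℂ] Fock n)
        + (∑' k : ℕ, ∑ w : Fin (k + 1) → Fin n,
          ((r : ℂ) ^ (k + 1) * a (List.ofFn w)) • wordProd S (List.ofFn w))‖ ≤ 1) :
    (∀ k : ℕ, 1 ≤ k →
      Real.sqrt (∑ w : Fin k → Fin n, ‖a (List.ofFn w)‖ ^ 2) ≤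
        1 - ‖a []‖) ∧
    (∀ (K : Type) [NormedAddCommGroup K] [InnerProductSpace ℂ K] [CompleteSpace K],
      ∀ T : Fin n → K →L[ℂ] K,
        Real.sqrt ‖∑ i, T i * ContinuousLinearMap.adjoint (T i)‖ ≤ 1 / 2 →
        Summable (fun k : ℕ => ‖∑ w : Fin k → Fin n,
          ((‖a (List.ofFn w)‖ : ℂ)) • wordProd T (List.ofFn w)‖) ∧
        ∑' k : ℕ, ‖∑ w : Fin k → Fin n,
          ((‖a (List.ofFn w)‖ : ℂ)) • wordProd T (List.ofFn w)‖ ≤ 1) ∧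
    (∀ (K : Type) [NormedAddCommGroup K] [InnerProductSpace ℂ K] [CompleteSpace K],
      ∀ T : Fin n → K →L[ℂ] K,
        Real.sqrt ‖∑ i, T i * ContinuousLinearMap.adjoint (T i)‖ ≤ 1 / 3 →
        Summable (fun k : ℕ => ‖∑ w : Fin (k + 1) → Fin n,
          ((‖a (List.ofFn w)‖ : ℂ)) •
            ContinuousLinearMap.adjoint (wordProd T (List.ofFn w))‖) ∧
        Summable (fun k : ℕ => ‖∑ w : Fin (k + 1) → Fin n,
          ((‖a (List.ofFn w)‖ : ℂ)) • wordProd T (List.ofFn w)‖) ∧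
        (∑' k : ℕ, ‖∑ w : Fin (k + 1) → Fin n,
          ((‖a (List.ofFn w)‖ : ℂ)) •
            ContinuousLinearMap.adjoint (wordProd T (List.ofFn w))‖)
          + ‖a []‖
          + (∑' k : ℕ, ‖∑ w : Fin (k + 1) → Fin n,
            ((‖a (List.ofFn w)‖ : ℂ)) • wordProd T (List.ofFn w)‖) ≤ 1) ∧
    (∀ r : Fin n → ℝ, (∀ i, 0 ≤ r i) →
      (Real.sqrt (∑ i, r i ^ 2) ≤ 1 / 2 →
        Summable (fun α : List (Fin n) => ‖a α‖ * wordProd r α) ∧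
        ∑' α : List (Fin n), ‖a α‖ * wordProd r α ≤ 1) ∧
      (Real.sqrt (∑ i, r i ^ 2) ≤ 1 / 3 →
        Summable (fun α : {l : List (Fin n) // l ≠ []} =>
          ‖a α.1‖ * wordProd r α.1) ∧
        ‖a []‖ +
          2 * ∑' α : {l : List (Fin n) // l ≠ []},
            ‖a α.1‖ * wordProd r α.1 ≤ 1)) := by
  have hi : ∀ k : ℕ, 1 ≤ k →
      Real.sqrt (∑ w : Fin k → Fin n, ‖a (List.ofFn w)‖ ^ 2) ≤ 1 - ‖a []‖ := by
    intro k hk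
    obtain ⟨m, rfl⟩ : ∃ m, k = m + 1 := ⟨k - 1, by omega⟩
    set s := Real.sqrt (∑ w : Fin (m+1) → Fin n, ‖a (List.ofFn w)‖ ^ 2) with hs
    have hs2 : ∑ w : Fin (m+1) → Fin n, ‖a (List.ofFn w)‖ ^ 2 = s ^ 2 :=
      (Real.sq_sqrt (by positivity)).symm
    have hx : ‖a []‖ = |(a []).re| := by
      have ha : a [] = (((a []).re : ℝ) : ℂ) := by
        apply Complex.ext <;> simp [ha_im]
      conv_lhs => rw [ha, Complex.norm_real, Real.norm_eq_abs]
    have key : ∀ r : ℝ, 0 ≤ r → r < 1 → r ^ (m+1) * s ≤ 1 - ‖a []‖ := by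
      intro r h0 h1
      rw [hx]
      refine real_aux _ s _ (Real.sqrt_nonneg _) fun t => ?_
      have := quad_bound a ha_im S hS r (hsum1 r h0 h1) (hsum2 r h0 h1) (hnorm r h0 h1) m t
      rwa [hs2] at this
    have hlim : Filter.Tendsto (fun r : ℝ => r ^ (m+1) * s) (nhdsWithin 1 (Set.Iio 1))
        (nhds (1 ^ (m+1) * s)) := by
      apply Filter.Tendsto.mono_left _ nhdsWithin_le_nhds
      exact Continuous.tendsto (by fun_prop) 1
    rw [one_pow, one_mul] at hlim
    refine le_of_tendsto hlim ?_
    filter_upwards [Ioo_mem_nhdsLT (show (0:ℝ) < 1 by norm_num)] with r hr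
    exact key r hr.1.le hr.2
  have hi' : ∀ k : ℕ, Real.sqrt (∑ w : Fin (k+1) → Fin n, ‖a (List.ofFn w)‖ ^ 2) ≤
      1 - ‖a []‖ := fun k => hi (k+1) (by omega)
  refine ⟨hi, ?_, ?_, ?_⟩
  · intro K _ _ _ T hT
    obtain ⟨g1, g2⟩ := geo_aux (fun k : ℕ => ‖∑ w : Fin (k+1) → Fin n,
          ((‖a (List.ofFn w)‖ : ℂ)) • wordProd T (List.ofFn w)‖) (1 - ‖a []‖) (1/2)
          (fun k => norm_nonneg _) (by norm_num) (by norm_num) (fun k => by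
            rw [adj_norm_eq]
            refine (adj_norm_le a T (1/2) (by norm_num) hT (k+1)).trans ?_
            gcongr
            exact hi' k)
    have hs : Summable (fun k : ℕ => ‖∑ w : Fin k → Fin n,
          ((‖a (List.ofFn w)‖ : ℂ)) • wordProd T (List.ofFn w)‖) := (summable_nat_add_iff 1).1 g1
    refine ⟨hs, ?_⟩
    rw [hs.tsum_eq_zero_add]
    have h0 : ‖∑ w : Fin 0 → Fin n,
          ((‖a (List.ofFn w)‖ : ℂ)) • wordProd T (List.ofFn w)‖ ≤ ‖a []‖ := by
      rw [adj_norm_eq]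
      refine (adj_norm_le a T (1/2) (by norm_num) hT 0).trans ?_
      simp
    rw [show (1 / 2 : ℝ) / (1 - 1 / 2) = 1 by norm_num] at g2
    linarith
  · intro K _ _ _ T hT
    obtain ⟨g1, g2⟩ := geo_aux (fun k : ℕ => ‖∑ w : Fin (k+1) → Fin n,
          ((‖a (List.ofFn w)‖ : ℂ)) • ContinuousLinearMap.adjoint (wordProd T (List.ofFn w))‖)
          (1 - ‖a []‖) (1/3)
          (fun k => norm_nonneg _) (by norm_num) (by norm_num) (fun k => by
            refine (adj_norm_le a T (1/3) (by norm_num) hT (k+1)).trans ?_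
            gcongr
            exact hi' k)
    simp_rw [adj_norm_eq]
    refine ⟨g1, g1, ?_⟩
    rw [show (1 / 3 : ℝ) / (1 - 1 / 3) = 1 / 2 by norm_num] at g2
    linarith
  · intro r hr
    refine ⟨fun h => ?_, fun h => ?_⟩
    · obtain ⟨g1, g2⟩ := r_summable a r hr _ (1/2) (by norm_num) (by norm_num) hi' h
      refine ⟨g1, g2.trans ?_⟩
      norm_num
    · obtain ⟨g1, g2⟩ := r_summable a r hr _ (1/3) (by norm_num) (by norm_num) hi' h
      refine ⟨g1.subtype _, ?_⟩
      have h1 := g1.tsum_subtype_add_tsum_subtype_compl {l : List (Fin n) | l ≠ []}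
      have h2 : ∑' x : ↥({l : List (Fin n) | l ≠ []}ᶜ), ‖a x.1‖ * wordProd r x.1 = ‖a []‖ := by
        have : ({l : List (Fin n) | l ≠ []}ᶜ) = {[]} := by ext; simp
        rw [this, tsum_singleton ([] : List (Fin n)) (fun x => ‖a x‖ * wordProd r x)]
        simp [wordProd]
      have h3 : ∑' α : {l : List (Fin n) // l ≠ []}, ‖a α.1‖ * wordProd r α.1 =
        ∑' x : ↥{l : List (Fin n) | l ≠ []}, ‖a x.1‖ * wordProd r x.1 := rfl
      rw [h3]
      rw [h2] at h1
      norm_num at g2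
      linarith
end

section
/- Let m ≥ 2 be an integer and let f(t) = ∑_{k=−(m−1)}^{m−1} a_k e^{ikt} and g(t) = ∑_{k=−(m−1)}^{m−1} b_k e^{ikt} be trigonometric polynomials with complex coefficients satisfying a_{−k} = conj(a_k) and b_{−k} = conj(b_k) for all k (so f and g are real-valued, and a₀, b₀ are real). If f(t) ≤ g(t) for all t ∈ ℝ, then: (i) |b_k − a_k| ≤ (b₀ − a₀) · cos(π/(⌊(m−1)/k⌋ + 2)) for every 1 ≤ k ≤ m−1; and (ii) a₀/2 + ∑_{k=1}^{m−1} r^k |a_k| ≤ b₀/2 + ∑_{k=1}^{m−1} r^k |b_k| for every r ∈ [0, t_m]. -/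
open scoped BigOperators

/-- `fm m t = ∑_{k=1}^{m-1} t^k * cos (π / (⌊(m-1)/k⌋ + 2))`, where `(m-1)/k` is the
integer part of `(m-1)/k` (natural number division). -/
noncomputable def fm (m : ℕ) (t : ℝ) : ℝ :=
  ∑ k ∈ Finset.Icc 1 (m - 1), t ^ k * Real.cos (Real.pi / (((m - 1) / k + 2 : ℕ) : ℝ))

lemma node_sum (M : ℕ) (hM : 0 < M) (l : ℤ) (h1 : -(M:ℤ) < l) (h2 : l < M) :
    ∑ j ∈ Finset.range M, Complex.exp (Complex.I * (l : ℂ) * (((2 * (j:ℝ) + 1) * Real.pi / M : ℝ) : ℂ))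
      = if l = 0 then (M : ℂ) else 0 := by
  have hMc : (M : ℂ) ≠ 0 := by exact_mod_cast hM.ne'
  split_ifs with h
  · subst h; simp
  · have hz : ∀ j ∈ Finset.range M,
        Complex.exp (Complex.I * (l : ℂ) * (((2 * (j:ℝ) + 1) * Real.pi / M : ℝ) : ℂ))
        = Complex.exp (Complex.I * l * Real.pi / M) *
          (Complex.exp (2 * Real.pi * Complex.I * l / M)) ^ j := by
      intro j _
      rw [← Complex.exp_nat_mul, ← Complex.exp_add]
      congr 1
      push_cast
      field_simp
      ring
    rw [Finset.sum_congr rfl hz, ← Finset.mul_sum]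
    have hne : Complex.exp (2 * Real.pi * Complex.I * l / M) ≠ 1 := by
      intro he
      rw [Complex.exp_eq_one_iff] at he
      obtain ⟨n, hn⟩ := he
      have hpi : (2 * Real.pi * Complex.I : ℂ) ≠ 0 := Complex.two_pi_I_ne_zero
      have : (l : ℂ) = n * M := by
        rw [div_eq_iff hMc] at hn
        apply mul_left_cancel₀ hpi
        rw [hn]; ring
      have h3 : l = n * M := by exact_mod_cast this
      have hM' : (0:ℤ) < M := by exact_mod_cast hM
      have h4 : n < 1 := by
        by_contra hc
        nlinarith
      have h5 : -1 < n := by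
        by_contra hc
        nlinarith
      have : n = 0 := by omega
      subst this
      simp at h3
      exact h h3
    rw [geom_sum_eq hne, ← Complex.exp_nat_mul]
    have : Complex.exp ((M:ℂ) * (2 * Real.pi * Complex.I * l / M)) = 1 := by
      rw [Complex.exp_eq_one_iff]
      exact ⟨l, by field_simp⟩
    rw [this]; simp

lemma cos_node (p : ℕ) (hp : 2 ≤ p) (j : ℕ) :
    Real.cos ((2 * (j:ℝ) + 1) * Real.pi / p) ≤ Real.cos (Real.pi / p) := by
  have hp0 : (0:ℝ) < p := by positivity
  have hpi := Real.pi_pos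
  have key : ∀ r : ℕ, (2 * (r:ℝ) + 1) ≤ p →
      Real.cos ((2 * (r:ℝ) + 1) * Real.pi / p) ≤ Real.cos (Real.pi / p) := by
    intro r hr
    apply Real.cos_le_cos_of_nonneg_of_le_pi
    · positivity
    · rw [div_le_iff₀ hp0]; nlinarith
    · gcongr
      have : (0:ℝ) ≤ r := by positivity
      nlinarith
  have hd : (j:ℝ) = (p:ℝ) * ((j / p : ℕ) : ℝ) + ((j % p : ℕ) : ℝ) := by
    exact_mod_cast (Nat.div_add_mod j p).symm
  have hlt : j % p < p := Nat.mod_lt _ (by omega)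
  have e1 : (2 * (j:ℝ) + 1) * Real.pi / p
      = (2 * ((j % p : ℕ):ℝ) + 1) * Real.pi / p + ((j / p : ℕ) : ℝ) * (2 * Real.pi) := by
    rw [hd]
    generalize ((j / p : ℕ) : ℝ) = q
    generalize ((j % p : ℕ) : ℝ) = r
    field_simp
    ring
  rw [e1, Real.cos_add_nat_mul_two_pi]
  by_cases hc : 2 * (j % p) + 1 ≤ p
  · exact key _ (by exact_mod_cast hc)
  · have h2 : (2 * ((p - 1 - j % p : ℕ):ℝ) + 1) ≤ p := by
      have : 2 * (p - 1 - j % p) + 1 ≤ p := by omega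
      exact_mod_cast this
    have h3 := key _ h2
    have h4 : ((p - 1 - j % p : ℕ):ℝ) = p - 1 - ((j % p : ℕ):ℝ) := by
      rw [Nat.cast_sub (by omega), Nat.cast_sub (by omega)]; simp
    have h5 : (2 * ((p - 1 - j % p : ℕ):ℝ) + 1) * Real.pi / p
        = 2 * Real.pi - (2 * ((j % p : ℕ):ℝ) + 1) * Real.pi / p := by
      rw [h4]; field_simp; ring
    rw [h5, Real.cos_two_pi_sub] at h3
    exact h3

lemma egervary (m : ℕ) (c : ℤ → ℂ)
    (hc : ∀ k : ℤ, c (-k) = (starRingEnd ℂ) (c k))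
    (hpos : ∀ t : ℝ, 0 ≤ (∑ k ∈ Finset.Icc (-(m : ℤ) + 1) ((m : ℤ) - 1),
        c k * Complex.exp (Complex.I * (k : ℂ) * (t : ℂ))).re)
    (k : ℕ) (hk : 1 ≤ k) (hkm : k ≤ m - 1) :
    (c k).re ≤ (c 0).re * Real.cos (Real.pi / (((m - 1) / k + 2 : ℕ) : ℝ)) := by
  set p := (m - 1) / k + 2 with hp
  set L := Real.cos (Real.pi / (p : ℝ)) with hL
  have hdeg : (m - 1) + k < p * k := by
    have h1 := Nat.lt_div_mul_add (a := m - 1) (b := k) (by omega)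
    rw [hp]; nlinarith
  set M := p * k with hMdef
  have hM : 0 < M := by omega
  have hMr : (0:ℝ) < M := by exact_mod_cast hM
  have hMz : (m:ℤ) - 1 + k < M := by omega
  set x : ℕ → ℝ := fun j => (2 * (j:ℝ) + 1) * Real.pi / M with hx
  have hS : ∀ l : ℤ, -(M:ℤ) < l → l < M →
      ∑ j ∈ Finset.range M, Complex.exp (Complex.I * (l : ℂ) * (x j : ℂ))
      = if l = 0 then (M : ℂ) else 0 := fun l => node_sum M hM l
  have hw : ∀ j, 0 ≤ L - Real.cos (k * x j) := by
    intro j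
    have : (k:ℝ) * x j = (2 * (j:ℝ) + 1) * Real.pi / p := by
      have hk0 : (k:ℝ) ≠ 0 := by positivity
      have hp0 : (p:ℝ) ≠ 0 := by positivity
      simp only [hx, hMdef]; push_cast; field_simp
    rw [this]
    linarith [cos_node p (by rw [hp]; exact Nat.le_add_left 2 _) j]
  have hmain : ∑ j ∈ Finset.range M,
      (∑ l ∈ Finset.Icc (-(m : ℤ) + 1) ((m : ℤ) - 1),
        c l * Complex.exp (Complex.I * (l : ℂ) * (x j : ℂ))) * ((L - Real.cos (k * x j) : ℝ) : ℂ)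
      = M * (L * c 0 - (c (-k) + c k) / 2) := by
    have hexp : ∀ j, ∀ l : ℤ, c l * Complex.exp (Complex.I * (l : ℂ) * (x j : ℂ))
        * ((L - Real.cos (k * x j) : ℝ) : ℂ)
        = c l * (L * Complex.exp (Complex.I * (l : ℂ) * (x j : ℂ))
          - (Complex.exp (Complex.I * ((l + k : ℤ) : ℂ) * (x j : ℂ))
            + Complex.exp (Complex.I * ((l - k : ℤ) : ℂ) * (x j : ℂ))) / 2) := by
      intro j l
      have e1 : Complex.exp (Complex.I * ((l + k : ℤ) : ℂ) * (x j : ℂ))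
          = Complex.exp (Complex.I * (l : ℂ) * (x j : ℂ)) * Complex.exp (k * x j * Complex.I) := by
        rw [← Complex.exp_add]; congr 1; push_cast; ring
      have e2 : Complex.exp (Complex.I * ((l - k : ℤ) : ℂ) * (x j : ℂ))
          = Complex.exp (Complex.I * (l : ℂ) * (x j : ℂ)) * Complex.exp (-(k * x j) * Complex.I) := by
        rw [← Complex.exp_add]; congr 1; push_cast; ring
      have e3 : ((Real.cos (k * x j) : ℝ) : ℂ)
          = (Complex.exp (k * x j * Complex.I) + Complex.exp (-(k * x j) * Complex.I)) / 2 := by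
        rw [Complex.ofReal_cos, Complex.cos]; push_cast; rfl
      rw [e1, e2, Complex.ofReal_sub, e3]
      ring
    simp_rw [Finset.sum_mul, hexp]
    rw [Finset.sum_comm]
    have hin : ∀ l ∈ Finset.Icc (-(m : ℤ) + 1) ((m : ℤ) - 1),
        ∑ j ∈ Finset.range M, c l * (L * Complex.exp (Complex.I * (l : ℂ) * (x j : ℂ))
          - (Complex.exp (Complex.I * ((l + k : ℤ) : ℂ) * (x j : ℂ))
            + Complex.exp (Complex.I * ((l - k : ℤ) : ℂ) * (x j : ℂ))) / 2)
        = (if l = 0 then M * (L * c l) else 0) - ((if l = -k then M * c l / 2 else 0)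
          + (if l = k then M * c l / 2 else 0)) := by
      intro l hl
      rw [Finset.mem_Icc] at hl
      rw [← Finset.mul_sum, Finset.sum_sub_distrib, ← Finset.mul_sum, ← Finset.sum_div,
        Finset.sum_add_distrib, hS l (by omega) (by omega), hS (l + k) (by omega) (by omega),
        hS (l - k) (by omega) (by omega)]
      have i1 : (l + k = 0) ↔ l = -k := by omega
      have i2 : (l - k = 0) ↔ l = k := by omega
      simp only [i1, i2]
      split_ifs <;> first | omega | ring
    rw [Finset.sum_congr rfl hin, Finset.sum_sub_distrib, Finset.sum_add_distrib,
      Finset.sum_ite_eq', Finset.sum_ite_eq', Finset.sum_ite_eq',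
      if_pos (by rw [Finset.mem_Icc]; omega), if_pos (by rw [Finset.mem_Icc]; omega),
      if_pos (by rw [Finset.mem_Icc]; omega)]
    ring
  have hre := congrArg Complex.re hmain
  have hge : 0 ≤ (M * (L * c 0 - (c (-k) + c k) / 2) : ℂ).re := by
    rw [← hre, Complex.re_sum]
    apply Finset.sum_nonneg
    intro j _
    rw [Complex.re_mul_ofReal]
    exact mul_nonneg (hpos _) (hw j)
  have hck : (c (-k) + c k) / 2 = ((c k).re : ℂ) := by
    rw [hc, add_comm, Complex.add_conj]; push_cast; ring
  rw [hck, ← Complex.ofReal_natCast, Complex.re_ofReal_mul, Complex.sub_re,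
    Complex.re_ofReal_mul, Complex.ofReal_re] at hge
  have := nonneg_of_mul_nonneg_right hge hMr
  linarith

theorem stmt_18 (m : ℕ) (hm : 2 ≤ m) (a b : ℤ → ℂ)
    (ha : ∀ k : ℤ, a (-k) = (starRingEnd ℂ) (a k))
    (hb : ∀ k : ℤ, b (-k) = (starRingEnd ℂ) (b k))
    (hfg : ∀ t : ℝ,
      (∑ k ∈ Finset.Icc (-(m : ℤ) + 1) ((m : ℤ) - 1),
        a k * Complex.exp (Complex.I * (k : ℂ) * (t : ℂ))).re ≤
      (∑ k ∈ Finset.Icc (-(m : ℤ) + 1) ((m : ℤ) - 1),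
        b k * Complex.exp (Complex.I * (k : ℂ) * (t : ℂ))).re)
    (t : ℝ) (htm : t ∈ Set.Ioc (0 : ℝ) 1) (hts : fm m t = 1 / 2) :
    (∀ k : ℕ, 1 ≤ k → k ≤ m - 1 →
      ‖b (k : ℤ) - a (k : ℤ)‖ ≤
        ((b 0).re - (a 0).re) * Real.cos (Real.pi / (((m - 1) / k + 2 : ℕ) : ℝ))) ∧
    (∀ r : ℝ, 0 ≤ r → r ≤ t →
      (a 0).re / 2 + ∑ k ∈ Finset.Icc 1 (m - 1), r ^ k * ‖a (k : ℤ)‖ ≤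
      (b 0).re / 2 + ∑ k ∈ Finset.Icc 1 (m - 1), r ^ k * ‖b (k : ℤ)‖) := by
  have hi : ∀ k : ℕ, 1 ≤ k → k ≤ m - 1 →
      ‖b (k : ℤ) - a (k : ℤ)‖ ≤
        ((b 0).re - (a 0).re) * Real.cos (Real.pi / (((m - 1) / k + 2 : ℕ) : ℝ)) := by
    intro k hk hkm
    set φ : ℝ := -(b k - a k).arg / k with hφ
    have hk0 : (k:ℂ) ≠ 0 := by
      have : k ≠ 0 := by omega
      exact_mod_cast this
    have h := egervary m (fun l => (b l - a l) * Complex.exp (Complex.I * l * φ)) ?_ ?_ k hk hkm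
    · have e : (b k - a k) * Complex.exp (Complex.I * ((k:ℤ):ℂ) * φ) = (‖b k - a k‖ : ℂ) := by
        have h1 : Complex.I * ((k:ℤ):ℂ) * φ = -((b k - a k).arg * Complex.I) := by
          rw [hφ]; push_cast; field_simp
        rw [h1]
        have h2 := Complex.norm_mul_exp_arg_mul_I (b k - a k)
        calc (b k - a k) * Complex.exp (-((b k - a k).arg * Complex.I))
            = (‖b k - a k‖ * Complex.exp ((b k - a k).arg * Complex.I))
              * Complex.exp (-((b k - a k).arg * Complex.I)) := by rw [h2]
          _ = _ := by rw [mul_assoc, ← Complex.exp_add]; simp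
      simp only [e] at h
      simpa using h
    · intro l
      simp only [ha, hb, map_mul, map_sub, ← Complex.exp_conj, Complex.conj_I, Complex.conj_ofReal,
        map_intCast]
      congr 2
      push_cast; ring
    · intro s
      have h := hfg (φ + s)
      have e : ∀ d : ℤ → ℂ, ∀ l : ℤ, d l * Complex.exp (Complex.I * l * ((φ + s : ℝ) : ℂ))
          = d l * Complex.exp (Complex.I * l * φ) * Complex.exp (Complex.I * l * s) := by
        intro d l
        rw [mul_assoc (d l), ← Complex.exp_add]; congr 2; push_cast; ring
      simp_rw [e] at h
      simp_rw [sub_mul, Finset.sum_sub_distrib, Complex.sub_re]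
      linarith
  refine ⟨hi, ?_⟩
  intro r hr hrt
  have hcos : ∀ k : ℕ, 0 ≤ Real.cos (Real.pi / (((m - 1) / k + 2 : ℕ) : ℝ)) := by
    intro k
    have hpi := Real.pi_pos
    apply Real.cos_nonneg_of_neg_pi_div_two_le_of_le
    · have : 0 ≤ Real.pi / (((m - 1) / k + 2 : ℕ) : ℝ) := by positivity
      linarith
    · gcongr
      exact_mod_cast Nat.le_add_left 2 _
  have hfr : fm m r ≤ 1 / 2 := by
    rw [← hts]
    unfold fm
    apply Finset.sum_le_sum
    intro k _
    exact mul_le_mul_of_nonneg_right (pow_le_pow_left₀ hr hrt k) (hcos k)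
  have hd : 0 ≤ (b 0).re - (a 0).re := by
    by_contra hneg
    have h1 := hi 1 le_rfl (by omega)
    have hpos : 0 < Real.cos (Real.pi / (((m - 1) / 1 + 2 : ℕ) : ℝ)) := by
      have hpi := Real.pi_pos
      apply Real.cos_pos_of_mem_Ioo
      constructor
      · have : 0 ≤ Real.pi / (((m - 1) / 1 + 2 : ℕ) : ℝ) := by positivity
        linarith
      · gcongr
        have : 2 < (m - 1) / 1 + 2 := by rw [Nat.div_one]; omega
        exact_mod_cast this
    have h2 := norm_nonneg (b ((1:ℕ):ℤ) - a ((1:ℕ):ℤ))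
    have h3 := mul_neg_of_neg_of_pos (not_le.mp hneg) hpos
    exact absurd (h2.trans h1) (not_le.mpr h3)
  have hsum : ∑ k ∈ Finset.Icc 1 (m - 1), r ^ k * ‖a (k : ℤ)‖ ≤
      ∑ k ∈ Finset.Icc 1 (m - 1), r ^ k * ‖b (k : ℤ)‖ + ((b 0).re - (a 0).re) * fm m r := by
    unfold fm
    rw [Finset.mul_sum, ← Finset.sum_add_distrib]
    apply Finset.sum_le_sum
    intro k hk
    rw [Finset.mem_Icc] at hk
    have h1 := hi k hk.1 hk.2
    have h2 : ‖a (k:ℤ)‖ ≤ ‖b (k:ℤ)‖ + ‖b (k : ℤ) - a (k : ℤ)‖ := by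
      have := norm_sub_norm_le (a (k:ℤ)) (b (k:ℤ))
      rw [norm_sub_rev] at this
      linarith
    have h3 := mul_le_mul_of_nonneg_left (h2.trans (add_le_add_right h1 _)) (pow_nonneg hr k)
    linarith
  nlinarith [mul_le_mul_of_nonneg_left hfr hd]
end
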